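/- Let α be a real number with 0 < α ≤ 0.6, let b₀ and k be positive integers, and let b_0, b_1, …, b_{b₀+k} be a non-decreasing sequence of positive real numbers with b_0 = b₀. Then k·∑_{j=0}^{b₀−1} (α·(b_{j+1} − b_j) + 1)/b_j + ∑_{j=b₀}^{b₀+k−1} ( (α·(b_{j+1} − b_j) + 1)·(k + b₀ − j)/b_j − 1/(2·b_j) ) ≥ α·(k + b₀)·ln((k + b₀)/b₀) + α·k·ln(1/α). -/

import Mathlib

open Real

/-!
Write `y j = log (b j)`, `m = b₀`, and let `x > 0` be a free parameter. The increment terms satisfy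
`(b (j + 1) - b j) / b j ≥ y (j + 1) - y j`, and the remaining ones are bounded by the tangent line
of `s ↦ exp (-s)` at `log x`, that is `1 / b j ≥ (1 + log x - y j) / x`. Everything is now linear
in `y`: the increments telescope to `α * (∑ i < k, y (m + i + 1) - k * y 0)`, while the tangent
lines carry total weight `k * (m + k / 2)`, placed on the earlier terms of the sequence. With
`x = (m + k / 2) / α` both families of coefficients of `y` have the same total, so Chebyshev's sum
inequality for the monotone `y` discards both and leaves `α * k * (1 + log x - y 0)`. Since the
midpoint rule overestimates the integral of the concave function `log` over `[m, m + k]`, this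
quantity is at least the asserted bound.
-/

section Log

lemma log_sub_log_le_sub_div {a b : ℝ} (ha : 0 < a) (hb : 0 < b) :
    log b - log a ≤ (b - a) / a := by
  rw [← log_div hb.ne' ha.ne', sub_div, div_self ha.ne']
  exact log_le_sub_one_of_pos (div_pos hb ha)

lemma one_add_log_sub_log_div_le_inv {a x : ℝ} (ha : 0 < a) (hx : 0 < x) :
    (1 + log x - log a) / x ≤ a⁻¹ := by
  rw [div_le_iff₀ hx, inv_mul_eq_div]
  have h := log_sub_log_le_sub_div ha hx
  rw [sub_div, div_self ha.ne'] at h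
  linarith

lemma integral_log_le_sub_mul_log_midpoint {a b : ℝ} (ha : 0 < a) (hab : a ≤ b) :
    ∫ s in a..b, log s ≤ (b - a) * log ((a + b) / 2) := by
  set c := (a + b) / 2 with hc
  have hc_pos : 0 < c := by linarith
  have tangent_integrable : IntervalIntegrable (fun s ↦ log c + (s - c) / c)
      MeasureTheory.volume a b := by
    apply Continuous.intervalIntegrable
    fun_prop
  calc ∫ s in a..b, log s
      ≤ ∫ s in a..b, (log c + (s - c) / c) := by
        refine intervalIntegral.integral_mono_on hab intervalIntegral.intervalIntegrable_log'
          tangent_integrable fun s hs ↦ ?_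
        linarith [log_sub_log_le_sub_div hc_pos (ha.trans_le hs.1)]
    _ = (b - a) * log c + ((b ^ 2 - a ^ 2) / 2 - (b - a) * c) / c := by
        rw [intervalIntegral.integral_add (by simp)
          (Continuous.intervalIntegrable (by fun_prop) _ _), intervalIntegral.integral_div,
          intervalIntegral.integral_sub (by simp) (by simp)]
        simp
    _ = (b - a) * log c := by
        rw [show (b ^ 2 - a ^ 2) / 2 - (b - a) * c = 0 by rw [hc]; ring, zero_div, add_zero]

lemma add_mul_log_div_le {a h : ℝ} (ha : 0 < a) (hh : 0 ≤ h) :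
    (h + a) * log ((h + a) / a) ≤ h * (1 + log ((a + h / 2) / a)) := by
  have midpoint := integral_log_le_sub_mul_log_midpoint ha (le_add_of_nonneg_left hh : a ≤ h + a)
  rw [integral_log, show (a + (h + a)) / 2 = a + h / 2 by ring] at midpoint
  rw [log_div (by positivity) ha.ne', log_div (by positivity) ha.ne']
  linarith

end Log

section WeightedSums

open Finset

lemma sum_range_sub_mul_sub_succ {R : Type*} [CommRing R] (c : R) (z : ℕ → R) (n : ℕ) :
    ∑ i ∈ range n, (c - i) * (z (i + 1) - z i) =
      ∑ i ∈ range n, z (i + 1) + (c - n) * z n - c * z 0 := by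
  induction n with
  | zero => simp
  | succ n ih =>
    rw [sum_range_succ, sum_range_succ, ih]
    push_cast
    ring

lemma sum_range_sub_sub_half {K : Type*} [Field K] [CharZero K] (c : K) (n : ℕ) :
    ∑ i ∈ range n, (c - i - 1 / 2) = n * (c - n / 2) := by
  induction n with
  | zero => simp
  | succ n ih =>
    rw [sum_range_succ, ih]
    push_cast
    ring

lemma card_mul_sum_initial_le_card_mul_sum_final {R : Type*} [CommRing R] [LinearOrder R]
    [IsStrictOrderedRing R] {y : ℕ → R} {m k : ℕ} (hy : MonotoneOn y (Set.Iic (m + k))) :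
    k * ∑ j ∈ range m, y j ≤ m * ∑ i ∈ range k, y (m + i + 1) := by
  have initial_le : ∑ j ∈ range m, y j ≤ m * y m := by
    simpa using sum_le_card_nsmul (range m) y (y m) fun j hj ↦ by
      have hj := mem_range.1 hj
      exact hy (Set.mem_Iic.2 (by lia)) (Set.mem_Iic.2 (by lia)) hj.le
  have le_final : k * y m ≤ ∑ i ∈ range k, y (m + i + 1) := by
    simpa using card_nsmul_le_sum (range k) (fun i ↦ y (m + i + 1)) (y m) fun i hi ↦ by
      have hi := mem_range.1 hi
      exact hy (Set.mem_Iic.2 (by lia)) (Set.mem_Iic.2 (by lia)) (by lia)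
  calc (k : R) * ∑ j ∈ range m, y j ≤ k * (m * y m) := by gcongr
    _ = m * (k * y m) := by ring
    _ ≤ m * ∑ i ∈ range k, y (m + i + 1) := by gcongr

variable {K : Type*} [Field K] [LinearOrder K] [IsStrictOrderedRing K]

lemma sum_range_sub_half_mul_le {z : ℕ → K} {k : ℕ} (hz : MonotoneOn z (Set.Iic k)) :
    ∑ i ∈ range k, ((k : K) - i - 1 / 2) * z i ≤ k / 2 * ∑ i ∈ range k, z (i + 1) := by
  obtain rfl | hk := k.eq_zero_or_pos
  · simp
  have weight_anti : Antitone fun i : ℕ ↦ (k : K) - i - 1 / 2 := fun i j hij ↦ by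
    dsimp only
    gcongr
  have z_mono : MonotoneOn z (range k) :=
    hz.mono fun i hi ↦ (mem_range.1 hi).le
  have chebyshev := ((weight_anti.antitoneOn _).antivaryOn z_mono).card_mul_sum_le_sum_mul_sum
  rw [card_range, sum_range_sub_sub_half, mul_assoc, sub_half] at chebyshev
  calc ∑ i ∈ range k, ((k : K) - i - 1 / 2) * z i
      ≤ k / 2 * ∑ i ∈ range k, z i :=
        le_of_mul_le_mul_left chebyshev (Nat.cast_pos.2 hk)
    _ ≤ k / 2 * ∑ i ∈ range k, z (i + 1) := by
        gcongr with i hi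
        have hi := mem_range.1 hi
        exact hz hi.le hi i.le_succ

lemma weighted_sum_le_mul_sum_final {y : ℕ → K} {m k : ℕ}
    (hy : MonotoneOn y (Set.Iic (m + k))) :
    k * ∑ j ∈ range m, y j + ∑ i ∈ range k, ((k : K) - i - 1 / 2) * y (m + i) ≤
      (m + k / 2) * ∑ i ∈ range k, y (m + i + 1) := by
  have shift_mono : MonotoneOn (fun i ↦ y (m + i)) (Set.Iic k) := fun i hi j hj hij ↦
    hy (Nat.add_le_add_left hi m) (Nat.add_le_add_left hj m) (Nat.add_le_add_left hij m)
  rw [add_mul]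
  exact add_le_add (card_mul_sum_initial_le_card_mul_sum_final hy)
    (sum_range_sub_half_mul_le shift_mono)

end WeightedSums

section Linearization

open Finset

variable {α x : ℝ} {b : ℕ → ℝ}

lemma mul_log_sub_log_add_le {p q a a' : ℝ} (hp : 0 ≤ p) (hq : 0 ≤ q) (hx : 0 < x) (ha : 0 < a)
    (ha' : 0 < a') :
    p * (log a' - log a) + q * ((1 + log x - log a) / x) ≤ p * ((a' - a) / a) + q * a⁻¹ := by
  gcongr
  · exact log_sub_log_le_sub_div ha ha'
  · exact one_add_log_sub_log_div_le_inv ha hx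

lemma le_const_mul_sum_increments {c : ℝ} {m : ℕ} (hα : 0 ≤ α) (hc : 0 ≤ c) (hx : 0 < x)
    (hb : ∀ j ≤ m, 0 < b j) :
    α * c * (log (b m) - log (b 0)) + c * (m * (1 + log x) - ∑ j ∈ range m, log (b j)) / x ≤
      c * ∑ j ∈ range m, (α * (b (j + 1) - b j) + 1) / b j := by
  calc α * c * (log (b m) - log (b 0)) + c * (m * (1 + log x) - ∑ j ∈ range m, log (b j)) / x
      = ∑ j ∈ range m,
          (α * c * (log (b (j + 1)) - log (b j)) + c * ((1 + log x - log (b j)) / x)) := by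
        rw [sum_add_distrib, ← mul_sum, ← mul_sum, sum_range_sub fun j ↦ log (b j), ← sum_div,
          sum_sub_distrib, sum_const, card_range, nsmul_eq_mul, mul_div_assoc]
    _ ≤ ∑ j ∈ range m, (α * c * ((b (j + 1) - b j) / b j) + c * (b j)⁻¹) := by
        refine sum_le_sum fun j hj ↦ ?_
        have hj := mem_range.1 hj
        exact mul_log_sub_log_add_le (mul_nonneg hα hc) hc hx (hb j hj.le) (hb (j + 1) hj)
    _ = c * ∑ j ∈ range m, (α * (b (j + 1) - b j) + 1) / b j := by
        rw [mul_sum]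
        exact sum_congr rfl fun j _ ↦ by ring

lemma le_sum_linear_mul_increments {k : ℕ} (hα : 0 ≤ α) (hx : 0 < x) (hb : ∀ i ≤ k, 0 < b i) :
    α * (∑ i ∈ range k, log (b (i + 1)) - k * log (b 0)) +
        (k * (k / 2) * (1 + log x) - ∑ i ∈ range k, ((k : ℝ) - i - 1 / 2) * log (b i)) / x ≤
      ∑ i ∈ range k, ((α * (b (i + 1) - b i) + 1) * ((k : ℝ) - i) / b i - 1 / (2 * b i)) := by
  have abel := sum_range_sub_mul_sub_succ (k : ℝ) (fun i ↦ log (b i)) k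
  have weights := sum_range_sub_sub_half (k : ℝ) k
  rw [sub_self, zero_mul, add_zero] at abel
  rw [sub_half] at weights
  calc α * (∑ i ∈ range k, log (b (i + 1)) - k * log (b 0)) +
        (k * (k / 2) * (1 + log x) - ∑ i ∈ range k, ((k : ℝ) - i - 1 / 2) * log (b i)) / x
      = ∑ i ∈ range k, (α * ((k : ℝ) - i) * (log (b (i + 1)) - log (b i)) +
          ((k : ℝ) - i - 1 / 2) * ((1 + log x - log (b i)) / x)) := by
        rw [← abel, ← weights, mul_sum, sum_mul, ← sum_sub_distrib, sum_div, ← sum_add_distrib]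
        exact sum_congr rfl fun i _ ↦ by ring
    _ ≤ ∑ i ∈ range k, (α * ((k : ℝ) - i) * ((b (i + 1) - b i) / b i) +
          ((k : ℝ) - i - 1 / 2) * (b i)⁻¹) := by
        refine sum_le_sum fun i hi ↦ ?_
        have hi := mem_range.1 hi
        have hi_cast : (i : ℝ) + 1 ≤ k := mod_cast hi
        exact mul_log_sub_log_add_le (mul_nonneg hα (by linarith)) (by linarith) hx
          (hb i hi.le) (hb (i + 1) hi)
    _ = ∑ i ∈ range k, ((α * (b (i + 1) - b i) + 1) * ((k : ℝ) - i) / b i - 1 / (2 * b i)) :=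
        sum_congr rfl fun i _ ↦ by ring

lemma mul_one_add_log_div_le_sum_increments (hα : 0 < α) {m k : ℕ} (hb0 : 0 < b 0)
    (hb : MonotoneOn b (Set.Iic (m + k))) :
    α * k * (1 + log ((m + k / 2) / (α * b 0))) ≤
      k * ∑ j ∈ range m, (α * (b (j + 1) - b j) + 1) / b j +
        ∑ j ∈ Ico m (m + k),
          ((α * (b (j + 1) - b j) + 1) * ((k : ℝ) + m - j) / b j - 1 / (2 * b j)) := by
  obtain rfl | hk := k.eq_zero_or_pos
  · simp
  have hpos : ∀ j ≤ m + k, 0 < b j := fun j hj ↦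
    hb0.trans_le (hb (Set.mem_Iic.2 (Nat.zero_le _)) hj j.zero_le)
  have log_mono : MonotoneOn (fun j ↦ log (b j)) (Set.Iic (m + k)) := fun i hi j hj hij ↦
    log_le_log (hpos i hi) (hb hi hj hij)
  set x : ℝ := (m + k / 2) / α with hx_def
  have hx : 0 < x := by positivity
  have total_weight : k * (m + k / 2) / x = α * k := by rw [hx_def]; field_simp
  have chebyshev_gap : 0 ≤ α * ∑ i ∈ range k, log (b (m + i + 1)) -
      (k * ∑ j ∈ range m, log (b j) +
        ∑ i ∈ range k, ((k : ℝ) - i - 1 / 2) * log (b (m + i))) / x := by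
    rw [sub_nonneg, div_le_iff₀ hx, mul_right_comm, hx_def, mul_div_cancel₀ _ hα.ne']
    exact weighted_sum_le_mul_sum_final log_mono
  calc α * k * (1 + log ((m + k / 2) / (α * b 0)))
      = α * k * (1 + log x - log (b 0)) := by
        rw [← div_div, ← hx_def, log_div hx.ne' hb0.ne', add_sub_assoc]
    _ ≤ α * k * (1 + log x - log (b 0)) + _ := le_add_of_nonneg_right chebyshev_gap
    _ = (α * k * (log (b m) - log (b 0)) +
          k * (m * (1 + log x) - ∑ j ∈ range m, log (b j)) / x) +
        (α * (∑ i ∈ range k, log (b (m + i + 1)) - k * log (b m)) +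
          (k * (k / 2) * (1 + log x) -
            ∑ i ∈ range k, ((k : ℝ) - i - 1 / 2) * log (b (m + i))) / x) := by
        linear_combination -(1 + log x) * total_weight
    _ ≤ _ := by
        refine add_le_add
          (le_const_mul_sum_increments hα.le k.cast_nonneg hx fun j hj ↦ hpos j (by lia)) ?_
        refine (le_sum_linear_mul_increments (b := fun i ↦ b (m + i)) hα.le hx
          fun i hi ↦ hpos (m + i) (by lia)).trans_eq ?_
        rw [sum_Ico_eq_sum_range, Nat.add_sub_cancel_left]
        refine sum_congr rfl fun i _ ↦ ?_
        rw [Nat.cast_add, add_comm (m : ℝ), add_sub_add_right_eq_sub, add_assoc]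

end Linearization

theorem stmt_6_general {α : ℝ} (hα : 0 < α) (b₀ k : ℕ) (b : ℕ → ℝ) (hpos : 0 < b 0)
    (hmono : ∀ j < b₀ + k, b j ≤ b (j + 1)) (hb0 : b 0 ≤ b₀) :
    α * ((k : ℝ) + b₀) * log (((k : ℝ) + b₀) / b₀) + α * k * log (1 / α) ≤
      k * ∑ j ∈ Finset.range b₀, (α * (b (j + 1) - b j) + 1) / b j +
        ∑ j ∈ Finset.Ico b₀ (b₀ + k),
          ((α * (b (j + 1) - b j) + 1) * ((k : ℝ) + b₀ - j) / b j - 1 / (2 * b j)) := by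
  have hb₀ : (0 : ℝ) < b₀ := hpos.trans_le hb0
  have b_mono : MonotoneOn b (Set.Iic (b₀ + k)) :=
    monotoneOn_of_le_add_one Set.ordConnected_Iic fun j _ _ hj ↦ hmono j hj
  calc α * ((k : ℝ) + b₀) * log (((k : ℝ) + b₀) / b₀) + α * k * log (1 / α)
      = α * (((k : ℝ) + b₀) * log (((k : ℝ) + b₀) / b₀)) + α * k * log (1 / α) := by ring
    _ ≤ α * (k * (1 + log ((b₀ + k / 2) / b₀))) + α * k * log (1 / α) := by
        gcongr α * ?_ + _
        exact add_mul_log_div_le hb₀ k.cast_nonneg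
    _ = α * k * (1 + log ((b₀ + k / 2) / (α * b₀))) := by
        rw [one_div, log_inv, mul_comm α (b₀ : ℝ), ← div_div, log_div (by positivity) hα.ne']
        ring
    _ ≤ α * k * (1 + log ((b₀ + k / 2) / (α * b 0))) := by gcongr
    _ ≤ _ := mul_one_add_log_div_le_sum_increments hα hpos b_mono

theorem stmt_6 (α : ℝ) (hα0 : 0 < α) (hα : α ≤ 0.6)
    (b₀ k : ℕ) (hb₀ : 0 < b₀) (hk : 0 < k)
    (b : ℕ → ℝ) (hpos : ∀ j ≤ b₀ + k, 0 < b j) (hmono : ∀ j < b₀ + k, b j ≤ b (j + 1))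
    (hb0 : b 0 = (b₀ : ℝ)) :
    (k : ℝ) * ∑ j ∈ Finset.range b₀, (α * (b (j + 1) - b j) + 1) / b j +
      ∑ j ∈ Finset.Ico b₀ (b₀ + k),
        ((α * (b (j + 1) - b j) + 1) * ((k : ℝ) + (b₀ : ℝ) - (j : ℝ)) / b j - 1 / (2 * b j)) ≥
    α * ((k : ℝ) + (b₀ : ℝ)) * Real.log (((k : ℝ) + (b₀ : ℝ)) / (b₀ : ℝ)) +
      α * (k : ℝ) * Real.log (1 / α) :=
  stmt_6_general hα0 b₀ k b (hpos 0 (Nat.zero_le _)) hmono hb0.le
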